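/- arXiv:1209.3832 — 3 statements merged into one kernel-verified Lean document; each statement's English description precedes it below -/
import Mathlib

section
/- Let g be a finite-dimensional simple Lie algebra over ℂ with a ℤ/nℤ-grading g = ⊕_{i ∈ ℤ/nℤ} g_i, and let h_0 be a Cartan subalgebra of the grade-zero subalgebra g_0. Fix j ∈ ℤ/nℤ with j ≠ 0, regard g_j as an h_0-module via the adjoint action, and let μ : h_0 → ℂ be a nonzero weight of this module, i.e., μ ≠ 0 and the weight space g_j^{(μ)} = {x ∈ g_j | [t, x] = μ(t)·x for all t ∈ h_0} is nonzero. Then g_j^{(μ)} is one-dimensional. -/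
/-!
Write `S` for the weight space of `μ` in `V j`, and `κ` for the Killing form. For `0 ≠ x ∈ S` there
is `y` of degree `-j` and weight `-μ` with `κ x y ≠ 0`. It is enough that `κ · y` is injective on
`S`.

If `z ∈ S` then `⁅z, y⁆` lies in the Cartan subalgebra and `κ t ⁅z, y⁆ = μ t * κ z y`, so
`κ z y = 0` forces `⁅z, y⁆ = 0`. For `h = ⁅x, y⁆` the same formula shows that `κ t h ≠ 0` for some
`t`. This gives `μ h ≠ 0`: otherwise `x` and `y` preserve the generalized eigenspaces of `ad h`, on
which the commutator `h` has trace zero, so all weights vanish at `h` and `κ t h = 0` for all `t`.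
Now if `z ∈ S` is nonzero with `⁅y, z⁆ = 0`, then `z` is a lowest weight vector whose `x`-string
starts at the `h`-eigenvalue `μ h` with steps `μ h`; the string is finite, so as for `sl₂` we get
`2 * μ h = -(k * μ h)` for some natural number `k`, which is absurd.
-/

open LieAlgebra LieModule Module

section KillingForm

variable {R L ι : Type*} [CommRing R] [IsDomain R] [IsPrincipalIdealRing R]
  [LieRing L] [LieAlgebra R L] [Module.Free R L] [Module.Finite R L]
  [DecidableEq ι] [AddCommGroup ι] (V : ι → Submodule R L) [GradedLieAlgebra V]

lemma killingForm_eq_zero_of_mem_of_add_ne_zero {i j : ι} (hij : i + j ≠ 0) {x y : L}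
    (hx : x ∈ V i) (hy : y ∈ V j) : killingForm R L x y = 0 := by
  refine LinearMap.trace_eq_zero_of_mapsTo_ne (DirectSum.Decomposition.isInternal V)
    (fun k ↦ i + (j + k)) (fun k hk ↦ hij ?_) (fun k z hz ↦
      SetLike.GradedBracket.bracket_mem hx (SetLike.GradedBracket.bracket_mem hy hz))
  rwa [← add_assoc, add_eq_right] at hk

lemma eq_zero_of_forall_mem_neg_killingForm_eq_zero [IsKilling R L] {i : ι} {x : L}
    (hx : x ∈ V i) (h : ∀ y ∈ V (-i), killingForm R L x y = 0) : x = 0 := by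
  refine (IsKilling.killingForm_nondegenerate R L).1 x fun y ↦ ?_
  induction y using DirectSum.Decomposition.inductionOn V with
  | zero => simp
  | @homogeneous k y =>
    by_cases hk : i + k = 0
    · exact h y (by simpa only [← eq_neg_of_add_eq_zero_right hk] using y.2)
    · exact killingForm_eq_zero_of_mem_of_add_ne_zero V hk hx y.2
  | add y z hy hz => simp [hy, hz]

end KillingForm

section RootSpace

variable {K L : Type*} [Field K] [LieRing L] [LieAlgebra K L] [FiniteDimensional K L]
  {H : LieSubalgebra K L} [LieRing.IsNilpotent H]

lemma killingForm_eq_zero_of_mem_rootSpace_of_add_ne_zero [IsTriangularizable K H L]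
    {α β : H → K} (hαβ : α + β ≠ 0) {x y : L} (hx : x ∈ rootSpace H α)
    (hy : y ∈ rootSpace H β) : killingForm K L x y = 0 := by
  classical
  refine LinearMap.trace_eq_zero_of_mapsTo_ne
    (DirectSum.isInternal_submodule_of_iSupIndep_of_iSup_eq_top
      (LieSubmodule.iSupIndep_toSubmodule.mpr <| iSupIndep_genWeightSpace K H L)
      (LieSubmodule.iSup_toSubmodule_eq_top.mpr <| iSup_genWeightSpace_eq_top K H L))
    (fun γ ↦ α + (β + γ)) (fun γ ↦ by simpa only [← add_assoc] using add_ne_right.mpr hαβ)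
    (fun γ ↦ (mapsTo_toEnd_genWeightSpace_add_of_mem_rootSpace K L H L α (β + γ) hx).comp <|
      mapsTo_toEnd_genWeightSpace_add_of_mem_rootSpace K L H L β γ hy)

end RootSpace

section WeightSpace

variable {R L : Type*} [CommRing R] [LieRing L] [LieAlgebra R L] {H : LieSubalgebra R L}

lemma mem_engel_of_mem_rootSpace [LieRing.IsNilpotent H] {α : H → R} {t : H} (hα : α t = 0)
    {x : L} (hx : x ∈ rootSpace H α) : x ∈ LieSubalgebra.engel R (t : L) := by
  obtain ⟨k, hk⟩ := (mem_genWeightSpace L α x).mp hx t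
  rw [hα, zero_smul, sub_zero] at hk
  exact (LieSubalgebra.mem_engel_iff R (t : L) x).mpr ⟨k, hk⟩

lemma killingForm_lie_of_mem_weightSpace {μ : H → R} {x : L} (hx : x ∈ weightSpace L μ)
    (t : H) (y : L) : killingForm R L t ⁅x, y⁆ = μ t * killingForm R L x y := by
  have htx : ⁅(t : L), x⁆ = μ t • x := (mem_weightSpace ..).mp hx t
  rw [← LieModule.traceForm_apply_lie_apply, htx, map_smul, LinearMap.smul_apply, smul_eq_mul]

end WeightSpace

lemma mapsTo_toEnd_maxGenEigenspace_of_mem_engel {R L M : Type*} [CommRing R] [LieRing L]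
    [LieAlgebra R L] [AddCommGroup M] [Module R M] [LieRingModule L M] [LieModule R L M]
    {h x : L} (hx : x ∈ LieSubalgebra.engel R h) (c : R) :
    Set.MapsTo (toEnd R L M x) ((toEnd R L M h).maxGenEigenspace c)
      ((toEnd R L M h).maxGenEigenspace c) := by
  have hx' : x ∈ (toEnd R L L h).maxGenEigenspace 0 := by
    obtain ⟨k, hk⟩ := (LieSubalgebra.mem_engel_iff R h x).mp hx
    exact (End.mem_maxGenEigenspace _ _ _).mpr ⟨k, by rw [zero_smul, sub_zero]; exact hk⟩
  intro m hm
  simpa using lie_mem_maxGenEigenspace_toEnd hx' hm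

section Commutator

variable {K L M : Type*} [Field K] [LieRing L] [LieAlgebra K L]
  [AddCommGroup M] [Module K M] [LieRingModule L M] [LieModule K L M]
  [CharZero K] [FiniteDimensional K M]

-- The generalized `c`-eigenspace of `⁅x, y⁆` is stable under `x` and `y`, so `⁅x, y⁆` has trace
-- zero on it.
lemma eq_zero_of_hasEigenvalue_toEnd_lie {x y : L} (hx : x ∈ LieSubalgebra.engel K ⁅x, y⁆)
    (hy : y ∈ LieSubalgebra.engel K ⁅x, y⁆) {c : K}
    (hc : (toEnd K L M ⁅x, y⁆).HasEigenvalue c) : c = 0 := by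
  let f := toEnd K L M ⁅x, y⁆
  let N := f.maxGenEigenspace c
  have hxN : Set.MapsTo (toEnd K L M x) N N := mapsTo_toEnd_maxGenEigenspace_of_mem_engel hx c
  have hyN : Set.MapsTo (toEnd K L M y) N N := mapsTo_toEnd_maxGenEigenspace_of_mem_engel hy c
  have hnil := f.isNilpotent_restrict_maxGenEigenspace_sub_algebraMap c
  have hsub : (f - algebraMap K (End K M) c).restrict
      (End.mapsTo_maxGenEigenspace_of_comm (Algebra.mul_sub_algebraMap_commutes f c) c) =
      ⁅(toEnd K L M x).restrict hxN, (toEnd K L M y).restrict hyN⁆ - c • LinearMap.id := by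
    ext m
    change ⁅⁅x, y⁆, (m : M)⁆ - c • (m : M) = ⁅x, ⁅y, (m : M)⁆⁆ - ⁅y, ⁅x, (m : M)⁆⁆ - c • (m : M)
    rw [lie_lie]
  have htrace : c * finrank K N = 0 := by
    rw [hsub] at hnil
    simpa using (LinearMap.isNilpotent_trace_of_isNilpotent hnil).eq_zero
  have : Nontrivial N := by
    obtain ⟨m, hm⟩ := hc.exists_hasEigenvector
    exact Submodule.nontrivial_iff_ne_bot.mpr <| (Submodule.ne_bot_iff N).mpr ⟨m,
      (f.genEigenspace c).mono le_top hm.1, hm.2⟩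
  simpa [finrank_pos.ne'] using htrace

lemma traceForm_eq_zero_of_lie_eq_coe {H : LieSubalgebra K L} [LieRing.IsNilpotent H]
    [IsTriangularizable K H M] {h : H} {x y : L} (hxy : ⁅x, y⁆ = h)
    (hx : x ∈ LieSubalgebra.engel K (h : L)) (hy : y ∈ LieSubalgebra.engel K (h : L)) :
    traceForm K H M h = 0 := by
  rw [← hxy] at hx hy
  have hχ (χ : Weight K H M) : χ h = 0 := by
    refine eq_zero_of_hasEigenvalue_toEnd_lie (M := M) hx hy ?_
    rw [hxy]
    exact χ.hasEigenvalueAt h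
  ext t
  simp [traceForm_eq_sum_finrank_nsmul_mul, hχ]

end Commutator

lemma apply_ne_zero_of_killingForm_ne_zero {K L : Type*} [Field K] [CharZero K] [LieRing L]
    [LieAlgebra K L] [FiniteDimensional K L] {H : LieSubalgebra K L} [LieRing.IsNilpotent H]
    [IsTriangularizable K H L] {μ : H → K} (hμ : μ ≠ 0) {x y : L} (hxμ : x ∈ weightSpace L μ)
    (hyμ : y ∈ rootSpace H (-μ)) (hxy : killingForm K L x y ≠ 0) {h : H} (hh : ⁅x, y⁆ = h) :
    μ h ≠ 0 := by
  intro h0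
  obtain ⟨t, ht⟩ := Function.ne_iff.mp hμ
  have htrace : traceForm K H L h = 0 := traceForm_eq_zero_of_lie_eq_coe hh
    (mem_engel_of_mem_rootSpace h0 (weightSpace_le_genWeightSpace L μ hxμ))
    (mem_engel_of_mem_rootSpace (by simpa using h0) hyμ)
  have hκ : killingForm K L t h = 0 := by
    rw [killingForm, traceForm_comm]
    exact LinearMap.congr_fun htrace t
  rw [← hh, killingForm_lie_of_mem_weightSpace hxμ] at hκ
  exact mul_ne_zero ht hxy hκ

section LieString

variable {R L M : Type*} [CommRing R] [LieRing L] [LieAlgebra R L]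
  [AddCommGroup M] [Module R M] [LieRingModule L M] [LieModule R L M]
  {x y : L} {z : M} {a b : R}

lemma lie_toEnd_pow_apply {h : L} (hx : ⁅h, x⁆ = a • x) (hz : ⁅h, z⁆ = b • z) (k : ℕ) :
    ⁅h, (toEnd R L M x ^ k) z⁆ = (b + k * a) • (toEnd R L M x ^ k) z := by
  induction k with
  | zero => simpa using hz
  | succ k ih =>
    rw [pow_succ', Module.End.mul_apply, toEnd_apply_apply, leibniz_lie, hx, ih, smul_lie,
      lie_smul, ← add_smul]
    push_cast
    ring_nf

-- Both sides are doubled to avoid dividing `k * (k + 1)` by `2`.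
lemma two_smul_lie_toEnd_pow_succ_apply (hx : ⁅⁅x, y⁆, x⁆ = a • x) (hz : ⁅⁅x, y⁆, z⁆ = b • z)
    (hyz : ⁅y, z⁆ = 0) (k : ℕ) :
    (2 : R) • ⁅y, (toEnd R L M x ^ (k + 1)) z⁆ =
      (-((k + 1) * (2 * b + k * a))) • (toEnd R L M x ^ k) z := by
  have hyx (m : M) : ⁅y, ⁅x, m⁆⁆ = ⁅x, ⁅y, m⁆⁆ - ⁅⁅x, y⁆, m⁆ := by simp
  induction k with
  | zero => simp [hyx, hyz, hz, mul_smul]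
  | succ k ih =>
    rw [pow_succ', Module.End.mul_apply, toEnd_apply_apply, hyx, smul_sub, ← lie_smul, ih,
      lie_toEnd_pow_apply hx hz, lie_smul, smul_smul, pow_succ', Module.End.mul_apply,
      toEnd_apply_apply, ← sub_smul]
    push_cast
    ring_nf

end LieString

lemma exists_nat_two_mul_eq_of_lie_eq_zero {K L M : Type*} [Field K] [CharZero K] [LieRing L]
    [LieAlgebra K L] [AddCommGroup M] [Module K M] [LieRingModule L M] [LieModule K L M]
    [FiniteDimensional K M] {x y : L} {z : M} {a b : K} (ha : a ≠ 0)
    (hx : ⁅⁅x, y⁆, x⁆ = a • x) (hz : ⁅⁅x, y⁆, z⁆ = b • z) (hyz : ⁅y, z⁆ = 0) (hz0 : z ≠ 0) :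
    ∃ k : ℕ, 2 * b = -(k * a) := by
  obtain ⟨n, hn⟩ : ∃ n, (toEnd K L M x ^ n) z = 0 := by
    by_contra! hne
    have hinj : Function.Injective fun n : ℕ ↦ b + n * a := fun m n hmn ↦ by simpa [ha] using hmn
    refine Set.infinite_range_of_injective hinj
      ((toEnd K L M ⁅x, y⁆).finite_hasEigenvalue.subset ?_)
    rintro - ⟨n, rfl⟩
    exact End.hasEigenvalue_of_hasEigenvector
      ⟨End.mem_eigenspace_iff.mpr (lie_toEnd_pow_apply hx hz n), hne n⟩
  obtain ⟨k, hk, hk'⟩ := Nat.exists_not_and_succ_of_not_zero_of_exists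
    (p := fun n ↦ (toEnd K L M x ^ n) z = 0) (by simpa using hz0) ⟨n, hn⟩
  have h := two_smul_lie_toEnd_pow_succ_apply hx hz hyz k
  rw [hk', lie_zero, smul_zero, eq_comm, smul_eq_zero_iff_left hk, neg_eq_zero, mul_eq_zero] at h
  exact ⟨k, eq_neg_of_add_eq_zero_left (h.resolve_left k.cast_add_one_ne_zero)⟩

section Graded

variable {K L ι : Type*} [Field K] [LieRing L] [LieAlgebra K L] [AddCommGroup ι] [DecidableEq ι]
  (V : ι → Submodule K L) [GradedLieAlgebra V] {H : LieSubalgebra K L} [LieRing.IsNilpotent H]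

-- The hypothesis `hH` says that `H` is a Cartan subalgebra of the subalgebra `V 0`, without leaving
-- `L`: a nilpotent subalgebra is Cartan if and only if it is its own zero root space.
lemma lie_mem_of_mem_rootSpace_neg (hH : ∀ x, x ∈ H ↔ x ∈ V 0 ∧ x ∈ rootSpace H 0) {i : ι}
    {χ : H → K} {x y : L} (hx : x ∈ V i) (hxχ : x ∈ rootSpace H χ) (hy : y ∈ V (-i))
    (hyχ : y ∈ rootSpace H (-χ)) : ⁅x, y⁆ ∈ H := by
  refine (hH _).mpr ⟨?_, ?_⟩
  · simpa only [add_neg_cancel] using SetLike.GradedBracket.bracket_mem hx hy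
  · simpa only [add_neg_cancel] using lie_mem_genWeightSpace_of_mem_genWeightSpace hxχ hyχ

variable [FiniteDimensional K L] [IsKilling K L] [IsTriangularizable K H L]

lemma exists_mem_neg_killingForm_ne_zero (hH : H.toSubmodule ≤ V 0) {i : ι} {χ : H → K} {x : L}
    (hx : x ∈ V i) (hxχ : x ∈ rootSpace H χ) (hx0 : x ≠ 0) :
    ∃ y ∈ V (-i), y ∈ rootSpace H (-χ) ∧ killingForm K L x y ≠ 0 := by
  contrapose! hx0
  refine eq_zero_of_forall_mem_neg_killingForm_eq_zero V hx fun y hy ↦ ?_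
  let N : LieSubmodule K H L :=
    { V (-i) with
      lie_mem := fun {t m} hm ↦ by
        have htm : ⁅(t : L), m⁆ ∈ V (0 + -i) := SetLike.GradedBracket.bracket_mem (hH t.2) hm
        rwa [zero_add] at htm }
  have hyN : y ∈ ⨆ ψ : Weight K H L, N ⊓ genWeightSpace L ψ := by
    rw [← eq_iSup_inf_genWeightSpace]
    exact hy
  clear hy
  induction hyN using LieSubmodule.iSup_induction' with
  | mem ψ y hy =>
    by_cases hψ : χ + ψ = 0
    · exact hx0 y hy.1 (eq_neg_of_add_eq_zero_right hψ ▸ hy.2)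
    · exact killingForm_eq_zero_of_mem_rootSpace_of_add_ne_zero hψ hxχ hy.2
  | zero => simp
  | add y z _ _ hy hz => simp [hy, hz]

variable (hH : ∀ x, x ∈ H ↔ x ∈ V 0 ∧ x ∈ rootSpace H 0)
include hH

lemma eq_zero_of_mem_of_forall_killingForm_eq_zero {h : L} (hh : h ∈ H)
    (h0 : ∀ t : H, killingForm K L t h = 0) : h = 0 := by
  by_contra hne
  obtain ⟨hhV, hhχ⟩ := (hH h).mp hh
  obtain ⟨t, htV, htχ, ht⟩ := exists_mem_neg_killingForm_ne_zero V (fun z hz ↦ ((hH z).mp hz).1)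
    hhV hhχ hne
  have htH : t ∈ H := (hH t).mpr
    ⟨by simpa only [neg_zero] using htV, by simpa only [neg_zero] using htχ⟩
  exact ht (by simpa only [killingForm, traceForm_comm K L L h t] using h0 ⟨t, htH⟩)

lemma lie_eq_zero_of_killingForm_eq_zero {i : ι} {μ : H → K} {x y : L} (hx : x ∈ V i)
    (hxμ : x ∈ weightSpace L μ) (hy : y ∈ V (-i)) (hyμ : y ∈ rootSpace H (-μ))
    (hxy : killingForm K L x y = 0) : ⁅x, y⁆ = 0 :=
  eq_zero_of_mem_of_forall_killingForm_eq_zero V hH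
    (lie_mem_of_mem_rootSpace_neg V hH hx (weightSpace_le_genWeightSpace L μ hxμ) hy hyμ) fun t ↦ by
      rw [killingForm_lie_of_mem_weightSpace hxμ, hxy, mul_zero]

lemma eq_zero_of_mem_weightSpace_of_killingForm_eq_zero [CharZero K] {i : ι} {μ : H → K}
    (hμ : μ ≠ 0) {x y z : L} (hx : x ∈ V i ⊓ (weightSpace L μ).toSubmodule)
    (hz : z ∈ V i ⊓ (weightSpace L μ).toSubmodule) (hy : y ∈ V (-i)) (hyμ : y ∈ rootSpace H (-μ))
    (hxy : killingForm K L x y ≠ 0) (hzy : killingForm K L z y = 0) : z = 0 := by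
  obtain ⟨h, hh⟩ : ∃ h : H, ⁅x, y⁆ = h :=
    ⟨⟨_, lie_mem_of_mem_rootSpace_neg V hH hx.1 (weightSpace_le_genWeightSpace L μ hx.2) hy hyμ⟩,
      rfl⟩
  have hμh : μ h ≠ 0 := apply_ne_zero_of_killingForm_ne_zero hμ hx.2 hyμ hxy hh
  have lie_h {w : L} (hw : w ∈ weightSpace L μ) : ⁅⁅x, y⁆, w⁆ = μ h • w := by
    rw [hh]
    exact (mem_weightSpace ..).mp hw h
  have hyz : ⁅y, z⁆ = 0 := by
    rw [← lie_skew, lie_eq_zero_of_killingForm_eq_zero V hH hz.1 hz.2 hy hyμ hzy, neg_zero]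
  by_contra hz0
  obtain ⟨k, hk⟩ := exists_nat_two_mul_eq_of_lie_eq_zero hμh (lie_h hx.2) (lie_h hz.2) hyz hz0
  have hk' : ((k + 2 : ℕ) : K) * μ h = 0 := by
    push_cast
    linear_combination hk
  exact mul_ne_zero (Nat.cast_ne_zero.mpr (by lia)) hμh hk'

lemma finrank_inf_weightSpace_eq_one [CharZero K] {i : ι} {μ : H → K} (hμ : μ ≠ 0)
    (hne : V i ⊓ (weightSpace L μ).toSubmodule ≠ ⊥) :
    finrank K ↥(V i ⊓ (weightSpace L μ).toSubmodule) = 1 := by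
  obtain ⟨x, hx, hx0⟩ := (Submodule.ne_bot_iff _).mp hne
  obtain ⟨y, hy, hyμ, hxy⟩ := exists_mem_neg_killingForm_ne_zero V
    (fun z hz ↦ ((hH z).mp hz).1) hx.1 (weightSpace_le_genWeightSpace L μ hx.2) hx0
  have hinj : Function.Injective <|
      ((killingForm K L).flip y).domRestrict (V i ⊓ (weightSpace L μ).toSubmodule) :=
    (injective_iff_map_eq_zero _).mpr fun z hz ↦ Subtype.ext <|
      eq_zero_of_mem_weightSpace_of_killingForm_eq_zero V hH hμ hx z.2 hy hyμ hxy hz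
  refine le_antisymm ?_ (Submodule.one_le_finrank_iff.mpr hne)
  simpa only [finrank_self] using LinearMap.finrank_le_finrank_of_injective hinj

end Graded

instance isNilpotent_map {R L L' : Type*} [CommRing R] [LieRing L] [LieAlgebra R L] [LieRing L']
    [LieAlgebra R L'] (f : L →ₗ⁅R⁆ L') (H : LieSubalgebra R L) [LieRing.IsNilpotent H] :
    LieRing.IsNilpotent (H.map f) := by
  have h : (f.comp H.incl).range = H.map f := by
    ext
    simp
  exact h ▸ (f.comp H.incl).isNilpotent_range

section Cartan

variable {R L : Type*} [CommRing R] [LieRing L] [LieAlgebra R L] {G : LieSubalgebra R L}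
  (H : LieSubalgebra R G)

instance isTriangularizable_map_incl [IsTriangularizable R H L] :
    IsTriangularizable R (H.map G.incl) L := by
  refine ⟨?_⟩
  rintro ⟨_, t, ht, rfl⟩
  exact IsTriangularizable.maxGenEigenspace_eq_top (R := R) (L := H) (M := L) ⟨t, ht⟩

lemma coe_mem_genWeightSpace_map_incl_iff [IsNoetherian R L] [LieRing.IsNilpotent H]
    {χ : H.map G.incl → R} {x : G} :
    (x : L) ∈ genWeightSpace L χ ↔
      x ∈ genWeightSpace G (χ ∘ H.equivMapOfInjective G.incl Subtype.coe_injective) := by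
  let f : G →ₗ⁅R, H⁆ L := { G.toSubmodule.subtype with map_lie' := rfl }
  rw [← comap_genWeightSpace_eq_of_injective (f := f) Subtype.val_injective,
    LieSubmodule.mem_comap, mem_genWeightSpace, mem_genWeightSpace]
  exact (H.equivMapOfInjective G.incl Subtype.coe_injective).surjective.forall

lemma mem_map_incl_iff_mem_rootSpace [H.IsCartanSubalgebra] [IsNoetherian R L] (x : L) :
    x ∈ H.map G.incl ↔ x ∈ G ∧ x ∈ rootSpace (H.map G.incl) 0 := by
  have hroot (z : G) : z ∈ H ↔ (z : L) ∈ rootSpace (H.map G.incl) 0 := by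
    rw [rootSpace, coe_mem_genWeightSpace_map_incl_iff]
    change z ∈ H ↔ z ∈ rootSpace H 0
    rw [rootSpace_zero_eq, LieSubalgebra.mem_toLieSubmodule]
  constructor
  · rintro ⟨t, ht, rfl⟩
    exact ⟨t.2, (hroot t).mp ht⟩
  · rintro ⟨hx, hx0⟩
    exact ⟨⟨x, hx⟩, (hroot _).mpr hx0, rfl⟩

end Cartan

theorem weight_space_one_dimensional_general {K L ι : Type*} [Field K] [CharZero K] [LieRing L]
    [LieAlgebra K L] [FiniteDimensional K L] [IsKilling K L] [AddCommGroup ι] [DecidableEq ι]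
    (V : ι → Submodule K L) [GradedLieAlgebra V] (g0 : LieSubalgebra K L)
    (hg0 : g0.toSubmodule = V 0) (h0 : LieSubalgebra K g0) [h0.IsCartanSubalgebra]
    [IsTriangularizable K h0 L] (j : ι) (μ : h0 → K) (hμ : μ ≠ 0) (W : Submodule K L)
    (hW : ∀ x : L, x ∈ W ↔ x ∈ V j ∧ ∀ t : h0, ⁅((t : g0) : L), x⁆ = μ t • x) (hWne : W ≠ ⊥) :
    finrank K W = 1 := by
  have hH (x : L) : x ∈ h0.map g0.incl ↔ x ∈ V 0 ∧ x ∈ rootSpace (h0.map g0.incl) 0 := by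
    rw [mem_map_incl_iff_mem_rootSpace, ← hg0, LieSubalgebra.mem_toSubmodule]
  let e : h0 ≃ₗ⁅K⁆ h0.map g0.incl := h0.equivMapOfInjective g0.incl Subtype.coe_injective
  obtain ⟨ν, rfl⟩ : ∃ ν : h0.map g0.incl → K, μ = ν ∘ e :=
    ⟨μ ∘ e.symm, funext fun t ↦ congr_arg μ (e.symm_apply_apply t).symm⟩
  have hν : ν ≠ 0 := fun h ↦ hμ (h ▸ rfl)
  obtain rfl : W = V j ⊓ (weightSpace L ν).toSubmodule := by
    ext x
    rw [hW, Submodule.mem_inf, LieSubmodule.mem_toSubmodule, mem_weightSpace, e.surjective.forall]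
    rfl
  exact finrank_inf_weightSpace_eq_one V hH hν hWne

/-- Let `L` be a finite-dimensional simple complex Lie algebra with a
`ℤ/nℤ`-grading `V`, and let `h0` be a Cartan subalgebra of the grade-zero subalgebra
`g0`.  Fix `j ≠ 0` and let `μ : h0 → ℂ` be a nonzero weight of the `h0`-module `V j`
(via the adjoint action), i.e. `μ ≠ 0` and the weight space
`W = {x ∈ V j | ⁅t, x⁆ = μ t • x for all t ∈ h0}` is nonzero.  Then `dim W = 1`. -/
theorem weight_space_one_dimensional {n : ℕ}
    {L : Type} [LieRing L] [LieAlgebra ℂ L]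
    [FiniteDimensional ℂ L] [LieAlgebra.IsSimple ℂ L]
    (V : ZMod n → Submodule ℂ L)
    (hVinternal : DirectSum.IsInternal V)
    (hVbracket : ∀ i j : ZMod n, ∀ x ∈ V i, ∀ y ∈ V j, ⁅x, y⁆ ∈ V (i + j))
    (g0 : LieSubalgebra ℂ L) (hg0 : g0.toSubmodule = V 0)
    (h0 : LieSubalgebra ℂ ↥g0) (hh0cartan : h0.IsCartanSubalgebra)
    (j : ZMod n) (hj : j ≠ 0)
    (μ : ↥h0 → ℂ) (hμ : μ ≠ 0)
    (W : Submodule ℂ L)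
    (hW : ∀ x : L, x ∈ W ↔
      x ∈ V j ∧ ∀ t : ↥h0, ⁅((t : ↥g0) : L), x⁆ = μ t • x)
    (hWne : W ≠ ⊥) :
    Module.finrank ℂ ↥W = 1 := by
  let _ : GradedLieAlgebra V :=
    { hVinternal.chooseDecomposition with
      bracket_mem := fun {i j x y} hx hy ↦ hVbracket i j x hx y hy }
  exact weight_space_one_dimensional_general V g0 hg0 h0 j μ hμ W hW hWne
end

section
/- Let g be a finite-dimensional semisimple Lie algebra over ℂ with Cartan subalgebra H, root system R ⊆ H^*, and a base Δ ⊆ R of simple roots; let Q^+ denote the set of ℕ-linear combinations of elements of Δ. Let M_1, …, M_ℓ and N be finite-dimensional g-modules, let β_j be a weight of M_j (with respect to H) for j = 1, …, ℓ, and let λ be a weight of N with λ − (β_1 + … + β_ℓ) ∈ Q^+. Then there exist weights μ_j of M_j with μ_j − β_j ∈ Q^+ for each j = 1, …, ℓ, such that μ_1 + … + μ_ℓ is a weight of N and λ − (μ_1 + … + μ_ℓ) ∈ Q^+. -/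
/-!
Write `χ - ∑ p, β p`, for a weight `χ` of `N`, as a sum of roots in `Δ`. If the sum is nonzero, then
positivity of a Weyl-invariant form on the root span provides a summand `α` with
`⟨χ - ∑ p, β p, α^∨⟩ > 0`, so `⟨χ, α^∨⟩ > 0` or some `⟨β p, α^∨⟩ < 0`. By `sl₂`-theory,
`χ - α` is a weight of `N` in the first case and `β p + α` is a weight of `M p` in the second.
Either replacement removes one summand, and one concludes by induction on their number.
-/

open LieAlgebra LieAlgebra.IsKilling LieModule Module

section RootPairing

variable {ι R S V W : Type*} [CommRing R] [AddCommGroup V] [Module R V] [AddCommGroup W]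
  [Module R W]

lemma two_mul_form_apply_root {P : RootPairing ι R V W} (B : P.InvariantForm) (x : V) (i : ι) :
    2 * B.form x (P.root i) = P.coroot' i x * B.form (P.root i) (P.root i) := by
  have reflect : B.form x (P.root i) =
      P.coroot' i x * B.form (P.root i) (P.root i) - B.form x (P.root i) := by
    conv_lhs => rw [← B.apply_reflection_reflection i, P.reflection_apply_self, P.reflection_apply]
    simp only [map_neg, map_sub, map_smul, LinearMap.sub_apply, LinearMap.smul_apply, smul_eq_mul,
      neg_sub]
  linear_combination reflect

variable [CommRing S] [LinearOrder S] [IsStrictOrderedRing S] [Algebra S R] [FaithfulSMul S R]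
  [Module S V] [IsScalarTower S R V]

lemma posForm_rootSpanMem_pos_iff {P : RootPairing ι R V W} [P.IsValuedIn S]
    (B : P.RootPositiveForm S) (x : P.rootSpan S) (i : ι) :
    0 < B.posForm x (P.rootSpanMem S i) ↔ 0 < P.coroot'In S i x := by
  have two_mul_posForm :
      2 * B.posForm x (P.rootSpanMem S i) = P.coroot'In S i x * B.rootLength i := by
    apply FaithfulSMul.algebraMap_injective S R
    simpa [map_ofNat] using! two_mul_form_apply_root B.toInvariantForm (x : V) i
  rw [← mul_pos_iff_of_pos_left (two_pos (α := S)), two_mul_posForm,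
    mul_pos_iff_of_pos_right (B.rootLength_pos i)]

variable (S) in
lemma exists_root_mem_coroot'_sum_pos [Finite ι] [IsDomain R] [Module S W] [IsScalarTower S R W]
    (P : RootPairing ι R V W) [P.IsValuedIn S] {s : Multiset V}
    (hs : ∀ v ∈ s, v ∈ Set.range P.root) (hsum : s.sum ≠ 0) :
    ∃ i, P.root i ∈ s ∧ ∃ z : S, 0 < z ∧ P.coroot' i s.sum = algebraMap S R z := by
  have := Fintype.ofFinite ι
  have : CanLift V ι P.root (· ∈ Set.range P.root) := ⟨fun _ h ↦ h⟩
  lift s to Multiset ι using hs with t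
  let B := P.posRootForm S
  let x : P.rootSpan S := (t.map (P.rootSpanMem S)).sum
  have coe_x : (x : V) = (t.map P.root).sum := by
    simp [x, Multiset.map_map]
  have hx : 0 < B.posForm x x :=
    P.posRootForm_posForm_pos_of_ne_zero S fun h ↦ hsum (by rw [← coe_x, h]; rfl)
  obtain ⟨i, hi, hpos⟩ : ∃ i ∈ t, 0 < B.posForm x (P.rootSpanMem S i) := by
    by_contra! hnonpos
    have expand : B.posForm x x = (t.map fun i ↦ B.posForm x (P.rootSpanMem S i)).sum := by
      simpa [Multiset.map_map] using! map_multiset_sum (B.posForm x) (t.map (P.rootSpanMem S))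
    have nonpos : (t.map fun i ↦ B.posForm x (P.rootSpanMem S i)).sum ≤ 0 := by
      simpa using Multiset.sum_le_card_nsmul _ 0 (Multiset.forall_mem_map_iff.2 hnonpos)
    exact hx.not_ge (expand.trans_le nonpos)
  refine ⟨i, Multiset.mem_map_of_mem _ hi, P.coroot'In S i x,
    (posForm_rootSpanMem_pos_iff B x i).1 hpos, ?_⟩
  rw [P.algebraMap_coroot'In_apply, coe_x]

end RootPairing

section Weights

variable {K L : Type*} [Field K] [LieRing L] [LieAlgebra K L] {H : LieSubalgebra K L}

/-- The functional `χ` is a weight of the `L`-module `M` with respect to `H`. In contrast to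
`LieModule.Weight`, which uses generalized weight spaces, this asks for a simultaneous
eigenvector. -/
def HasWeight (M : Type*) [AddCommGroup M] [Module K M] [LieRingModule L M]
    (χ : Dual K H) : Prop :=
  ∃ v : M, v ≠ 0 ∧ ∀ t : H, ⁅(t : L), v⁆ = χ t • v

variable {M : Type*} [AddCommGroup M] [Module K M] [LieRingModule L M] [LieModule K L M]

lemma lie_lie_eq_add_smul {t e : L} {v : M} {a b : K} (hv : ⁅t, v⁆ = a • v) (he : ⁅t, e⁆ = b • e) :
    ⁅t, ⁅e, v⁆⁆ = (a + b) • ⁅e, v⁆ := by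
  rw [leibniz_lie, he, hv, smul_lie, lie_smul, add_smul, add_comm]

variable [CharZero K] [FiniteDimensional K L] [IsKilling K L] [H.IsCartanSubalgebra]
  [IsTriangularizable K H L]

lemma HasWeight.mem_range_root {α : Dual K H} (hα : HasWeight L α) (h0 : α ≠ 0) :
    α ∈ Set.range (rootSystem H).root := by
  obtain ⟨v, hv0, hv⟩ := hα
  have v_mem : v ∈ rootSpace H α :=
    weightSpace_le_genWeightSpace L (α : H → K) ((mem_weightSpace ..).2 hv)
  let w : Weight K H L := ⟨α, fun hbot ↦ hv0 (by simpa [hbot] using v_mem)⟩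
  have hw : w.toLinear = α := rfl
  have w_nonzero : w.IsNonZero := fun h ↦ h0 (DFunLike.coe_injective h)
  exact ⟨⟨w, by simpa using w_nonzero⟩, hw⟩

variable [FiniteDimensional K M]

lemma HasWeight.add_root_or_exists_nat {χ : Dual K H} (hχ : HasWeight M χ) (α : H.root) :
    HasWeight M (χ + (rootSystem H).root α) ∨ ∃ n : ℕ, χ ((rootSystem H).coroot α) = n := by
  obtain ⟨v, hv0, hv⟩ := hχ
  have hα := H.isNonZero_coe_root α
  obtain ⟨h, e, f, ht, he, hf⟩ := exists_isSl2Triple_of_weight_isNonZero hα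
  by_cases hev : ⁅e, v⁆ = 0
  · have primitive : ht.HasPrimitiveVectorWith v (χ (coroot α)) :=
      ⟨hv0, by rw [ht.h_eq_coroot hα he hf, hv], hev⟩
    exact .inr primitive.exists_nat
  · exact .inl ⟨⁅e, v⁆, hev, fun t ↦
      lie_lie_eq_add_smul (hv t) (lie_eq_smul_of_mem_rootSpace he t)⟩

lemma HasWeight.sub_root_or_exists_neg_nat {χ : Dual K H} (hχ : HasWeight M χ) (α : H.root) :
    HasWeight M (χ - (rootSystem H).root α) ∨ ∃ n : ℕ, χ ((rootSystem H).coroot α) = -n := by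
  have h := hχ.add_root_or_exists_nat ((rootSystem H).reflectionPerm α α)
  simpa only [RootPairing.root_reflectionPerm, RootPairing.coroot_reflectionPerm,
    RootPairing.reflection_apply_self, RootPairing.coreflection_apply_self, map_neg,
    neg_eq_iff_eq_neg, ← sub_eq_add_neg] using h

variable {ι : Type*} [Fintype ι] {M : ι → Type*} [∀ p, AddCommGroup (M p)] [∀ p, Module K (M p)]
  [∀ p, LieRingModule L (M p)] [∀ p, LieModule K L (M p)] [∀ p, FiniteDimensional K (M p)]
  {N : Type*} [AddCommGroup N] [Module K N] [LieRingModule L N] [LieModule K L N]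
  [FiniteDimensional K N] {β : ι → Dual K H} {χ : Dual K H}

lemma HasWeight.sub_root_or_exists_add_root (hβ : ∀ p, HasWeight (M p) (β p))
    (hχ : HasWeight N χ) {α : H.root} {z : ℤ} (hz : 0 < z)
    (hα : (χ - ∑ p, β p) ((rootSystem H).coroot α) = z) :
    HasWeight N (χ - (rootSystem H).root α) ∨
      ∃ p, HasWeight (M p) (β p + (rootSystem H).root α) := by
  refine (hχ.sub_root_or_exists_neg_nat α).imp_right fun ⟨m, hm⟩ ↦ ?_
  by_contra! hnot
  choose k hk using fun p ↦ ((hβ p).add_root_or_exists_nat α).resolve_left (hnot p)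
  simp only [LinearMap.sub_apply, LinearMap.sum_apply, hm, hk] at hα
  have hsum : (-m - (∑ p, k p : ℕ) : ℤ) = z := by exact_mod_cast hα
  lia

theorem weight_raising_general {Δ : Set (Dual K H)} (hΔ : Δ ⊆ Set.range (rootSystem H).root)
    (hβ : ∀ p, HasWeight (M p) (β p)) (hχ : HasWeight N χ)
    (hdiff : χ - ∑ p, β p ∈ AddSubmonoid.closure Δ) :
    ∃ μ : ι → Dual K H,
      (∀ p, HasWeight (M p) (μ p) ∧ μ p - β p ∈ AddSubmonoid.closure Δ) ∧
      HasWeight N (∑ p, μ p) ∧ χ - ∑ p, μ p ∈ AddSubmonoid.closure Δ := by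
  classical
  obtain ⟨s, hsΔ, hs⟩ := AddSubmonoid.exists_multiset_of_mem_closure hdiff
  clear hdiff
  induction s using Multiset.strongInductionOn generalizing β χ with | _ s ih
  by_cases h0 : s.sum = 0
  · obtain rfl : χ = ∑ p, β p := sub_eq_zero.1 (hs ▸ h0)
    exact ⟨β, fun p ↦ ⟨hβ p, by simp⟩, hχ, by simp⟩
  obtain ⟨i, his, z, hz, hiz⟩ :=
    exists_root_mem_coroot'_sum_pos ℤ (rootSystem H) (fun v hv ↦ hΔ (hsΔ v hv)) h0
  let α := (rootSystem H).root i
  have hαΔ : α ∈ AddSubmonoid.closure Δ := AddSubmonoid.subset_closure (hsΔ α his)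
  obtain ⟨t, rfl⟩ := Multiset.exists_cons_of_mem his
  have htΔ : ∀ v ∈ t, v ∈ Δ := fun v hv ↦ hsΔ v (Multiset.mem_cons_of_mem hv)
  have ht : t.sum = χ - ∑ p, β p - α := by rw [← hs, Multiset.sum_cons, add_sub_cancel_left]
  rw [hs] at hiz
  obtain hlower | ⟨p, hraise⟩ : HasWeight N (χ - α) ∨ ∃ p, HasWeight (M p) (β p + α) :=
    hχ.sub_root_or_exists_add_root hβ hz hiz
  · obtain ⟨μ, hμ, hμN, hle⟩ := ih t (Multiset.lt_cons_self t α) hβ hlower htΔ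
      (by rw [ht, sub_right_comm])
    refine ⟨μ, hμ, hμN, ?_⟩
    convert! add_mem hle hαΔ using 1
    abel
  · let δ : ι → Dual K H := Pi.single p α
    have hβ' (q : ι) : HasWeight (M q) ((β + δ) q) := by
      obtain rfl | hq := eq_or_ne q p
      · simpa [δ] using hraise
      · simpa [δ, hq] using hβ q
    have hδ (q : ι) : δ q ∈ AddSubmonoid.closure Δ := by
      simp only [δ, Pi.single_apply]
      split_ifs
      exacts [hαΔ, zero_mem _]
    obtain ⟨μ, hμ, hμN, hle⟩ := ih t (Multiset.lt_cons_self t α) hβ' hχ htΔ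
      (by simp [ht, δ, Finset.sum_add_distrib, sub_sub])
    refine ⟨μ, fun q ↦ ⟨(hμ q).1, ?_⟩, hμN, hle⟩
    simpa [← sub_sub] using add_mem (hμ q).2 (hδ q)

end Weights

lemma mem_closure_finset_iff_exists_sum_smul (K : Type*) {V : Type*} [Semiring K] [AddCommMonoid V]
    [Module K V] {Δ : Finset V} {x : V} :
    x ∈ AddSubmonoid.closure (Δ : Set V) ↔ ∃ c : Δ → ℕ, x = ∑ v : Δ, (c v : K) • (v : V) := by
  simp only [AddSubmonoid.mem_closure_finset', Nat.cast_smul_eq_nsmul]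

/-- Let `L` be a finite-dimensional semisimple complex Lie algebra with
Cartan subalgebra `H`, root system the set of nonzero weights of the adjoint module,
and a base `Δ` of simple roots (a linearly independent set of roots such that every
root is an `ℕ`-linear or `(-ℕ)`-linear combination of elements of `Δ`); `Q⁺` is the set
of `ℕ`-linear combinations of elements of `Δ`.  Let `M 0, …, M (ℓ-1)` and `N` be
finite-dimensional `L`-modules, `β p` a weight of `M p` for each `p`, and `λ` a weight
of `N` with `λ - ∑ β p ∈ Q⁺`.  Then there are weights `μ p` of `M p` with
`μ p - β p ∈ Q⁺` such that `∑ μ p` is a weight of `N` and `λ - ∑ μ p ∈ Q⁺`. -/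
theorem weight_raising {L : Type} [LieRing L] [LieAlgebra ℂ L]
    [FiniteDimensional ℂ L] [LieAlgebra.IsSemisimple ℂ L]
    (H : LieSubalgebra ℂ L) (hH : H.IsCartanSubalgebra)
    -- `Δ` is a base of simple roots
    (Δ : Finset (Module.Dual ℂ ↥H))
    (hΔind : LinearIndependent ℂ (fun α : ↥Δ => (α : Module.Dual ℂ ↥H)))
    (hΔroot : ∀ α ∈ Δ, α ≠ 0 ∧ ∃ v : L, v ≠ 0 ∧ ∀ t : ↥H, ⁅(t : L), v⁆ = α t • v)
    (hΔbase : ∀ β : Module.Dual ℂ ↥H, β ≠ 0 →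
      (∃ v : L, v ≠ 0 ∧ ∀ t : ↥H, ⁅(t : L), v⁆ = β t • v) →
      (∃ c : ↥Δ → ℕ, β = ∑ α : ↥Δ, (c α : ℂ) • (α : Module.Dual ℂ ↥H)) ∨
      (∃ c : ↥Δ → ℕ, β = -∑ α : ↥Δ, (c α : ℂ) • (α : Module.Dual ℂ ↥H)))
    -- the modules and their weights
    (ℓ : ℕ) (M : Fin ℓ → Type)
    [∀ p, AddCommGroup (M p)] [∀ p, Module ℂ (M p)]
    [∀ p, LieRingModule L (M p)] [∀ p, LieModule ℂ L (M p)]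
    [∀ p, FiniteDimensional ℂ (M p)]
    (N : Type) [AddCommGroup N] [Module ℂ N]
    [LieRingModule L N] [LieModule ℂ L N] [FiniteDimensional ℂ N]
    (β : Fin ℓ → Module.Dual ℂ ↥H)
    (hβ : ∀ p : Fin ℓ, ∃ v : M p, v ≠ 0 ∧ ∀ t : ↥H, ⁅(t : L), v⁆ = β p t • v)
    (lam : Module.Dual ℂ ↥H)
    (hlam : ∃ v : N, v ≠ 0 ∧ ∀ t : ↥H, ⁅(t : L), v⁆ = lam t • v)
    (hdiff : ∃ c : ↥Δ → ℕ,
      lam - ∑ p, β p = ∑ α : ↥Δ, (c α : ℂ) • (α : Module.Dual ℂ ↥H)) :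
    ∃ μ : Fin ℓ → Module.Dual ℂ ↥H,
      (∀ p : Fin ℓ,
        (∃ v : M p, v ≠ 0 ∧ ∀ t : ↥H, ⁅(t : L), v⁆ = μ p t • v) ∧
        ∃ c : ↥Δ → ℕ,
          μ p - β p = ∑ α : ↥Δ, (c α : ℂ) • (α : Module.Dual ℂ ↥H)) ∧
      (∃ v : N, v ≠ 0 ∧ ∀ t : ↥H, ⁅(t : L), v⁆ = (∑ p, μ p) t • v) ∧
      ∃ c : ↥Δ → ℕ,
        lam - ∑ p, μ p = ∑ α : ↥Δ, (c α : ℂ) • (α : Module.Dual ℂ ↥H) := by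
  have : HasTrivialRadical ℂ L := inferInstance
  simp only [← mem_closure_finset_iff_exists_sum_smul ℂ] at hdiff ⊢
  exact weight_raising_general (fun α hα ↦ HasWeight.mem_range_root (hΔroot α hα).2 (hΔroot α hα).1)
    hβ hlam hdiff
end

section
/- Let g be a finite-dimensional simple Lie algebra over ℂ with a ℤ/nℤ-grading g = ⊕_{i ∈ ℤ/nℤ} g_i, and let h_0 be a Cartan subalgebra of the grade-zero subalgebra g_0. Then the restriction to h_0 of the Killing form of g is nondegenerate. -/
/-! The Killing form pairs `V i` and `V j` trivially unless `i + j = 0`, so its restriction to the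
degree-zero part `g₀ = V 0` has no kernel beyond that of the Killing form of `L`, which is zero for
simple `L` by Cartan's criterion. The restriction to `g₀` is still invariant, hence it makes the two
Fitting components of `g₀` under the nilpotent subalgebra `h₀` orthogonal. The Fitting null
component is the Cartan subalgebra `h₀` itself, so a second restriction, to `h₀`, does not create a
kernel either. -/

section Grading

variable {R L ι : Type*} [CommRing R] [LieRing L] [LieAlgebra R L] [IsNoetherian R L]
  [DecidableEq ι] [AddMonoid ι] [IsRightCancelAdd ι]
  {V : ι → Submodule R L} [SetLike.GradedBracket V] [∀ i, Module.Free R (V i)]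

theorem killingForm_eq_zero_of_add_ne_zero (hV : DirectSum.IsInternal V)
    {i j : ι} (hij : i + j ≠ 0) {x y : L} (hx : x ∈ V i) (hy : y ∈ V j) :
    killingForm R L x y = 0 := by
  have shift_ne (k : ι) : i + (j + k) ≠ k := by rwa [← add_assoc, ne_eq, add_eq_right]
  have mapsTo_shift (k : ι) : Set.MapsTo (LieAlgebra.ad R L x ∘ₗ LieAlgebra.ad R L y)
      (V k) (V (i + (j + k))) := fun _ hz ↦
    SetLike.GradedBracket.bracket_mem hx (SetLike.GradedBracket.bracket_mem hy hz)
  rw [killingForm_apply_apply]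
  exact LinearMap.trace_eq_zero_of_mapsTo_ne hV _ shift_ne mapsTo_shift

theorem ker_traceForm_gradeZero (hV : DirectSum.IsInternal V) {g0 : LieSubalgebra R L}
    (hg0 : g0.toSubmodule = V 0) :
    LinearMap.ker (LieModule.traceForm R g0 L) =
      (LinearMap.ker (killingForm R L)).comap g0.toSubmodule.subtype := by
  have codisjoint : Codisjoint g0.toSubmodule (⨆ (i) (_ : i ≠ 0), V i) := by
    rw [hg0, codisjoint_iff, ← iSup_split_single, hV.submodule_iSup_eq_top]
  have orthogonal : ∀ x ∈ g0.toSubmodule, ∀ y ∈ ⨆ (i) (_ : i ≠ 0), V i,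
      killingForm R L x y = 0 := fun x hx ↦ by
    suffices ⨆ (i) (_ : i ≠ 0), V i ≤ LinearMap.ker (killingForm R L x) from this
    exact iSup₂_le fun i hi y hy ↦
      killingForm_eq_zero_of_add_ne_zero hV (by rwa [zero_add]) (hg0 ▸ hx) hy
  exact LinearMap.BilinForm.ker_restrict_eq_of_codisjoint codisjoint orthogonal

end Grading

section Cartan

variable {R L : Type*} [CommRing R] [LieRing L] [LieAlgebra R L] [IsNoetherian R L]
  [IsArtinian R L] (H : LieSubalgebra R L) [H.IsCartanSubalgebra]

theorem codisjoint_cartan_posFittingComp :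
    Codisjoint H.toSubmodule (LieModule.posFittingComp R H L).toSubmodule := by
  have fitting : Codisjoint (LieAlgebra.rootSpace H 0) (LieModule.posFittingComp R H L) :=
    (LieModule.isCompl_genWeightSpace_zero_posFittingComp R H L).codisjoint
  rwa [LieAlgebra.rootSpace_zero_eq R L H, ← LieSubmodule.codisjoint_toSubmodule,
    LieSubalgebra.coe_toLieSubmodule] at fitting

theorem ker_traceForm_of_isCartanSubalgebra (M : Type*) [AddCommGroup M] [Module R M]
    [LieRingModule L M] [LieModule R L M] :
    LinearMap.ker (LieModule.traceForm R H M) =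
      (LinearMap.ker (LieModule.traceForm R L M)).comap H.toSubmodule.subtype :=
  LinearMap.BilinForm.ker_restrict_eq_of_codisjoint (codisjoint_cartan_posFittingComp H)
    fun _ hx _ hy ↦ LieModule.eq_zero_of_mem_genWeightSpace_mem_posFitting R H L
      (fun z ↦ LieModule.traceForm_lieInvariant R L M z)
      (LieAlgebra.toLieSubmodule_le_rootSpace_zero R L H hx) hy

end Cartan

-- By `LieAlgebra.restrict_killingForm`, the trace form of `h0` acting on `L` through `g0` is the
-- Killing form of `L` restricted to `h0`.
theorem killing_restricted_to_h0_nondegenerate_general {R L ι : Type*} [CommRing R] [LieRing L]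
    [LieAlgebra R L] [IsNoetherian R L] [IsArtinian R L] [LieAlgebra.IsKilling R L]
    [DecidableEq ι] [AddMonoid ι] [IsRightCancelAdd ι]
    (V : ι → Submodule R L) [SetLike.GradedBracket V] [∀ i, Module.Free R (V i)]
    (hV : DirectSum.IsInternal V) (g0 : LieSubalgebra R L) (hg0 : g0.toSubmodule = V 0)
    (h0 : LieSubalgebra R g0) [h0.IsCartanSubalgebra] :
    (LieModule.traceForm R h0 L).Nondegenerate := by
  refine (LieModule.traceForm_isSymm R h0 L).isRefl.nondegenerate_iff_separatingLeft.mpr ?_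
  rw [LinearMap.separatingLeft_iff_ker_eq_bot]
  calc LinearMap.ker (LieModule.traceForm R h0 L)
      = (LinearMap.ker (LieModule.traceForm R g0 L)).comap h0.toSubmodule.subtype :=
        ker_traceForm_of_isCartanSubalgebra h0 L
    _ = ((LinearMap.ker (killingForm R L)).comap g0.toSubmodule.subtype).comap
          h0.toSubmodule.subtype := by rw [ker_traceForm_gradeZero hV hg0]
    _ = ⊥ := by
        rw [LieAlgebra.IsKilling.ker_killingForm_eq_bot, Submodule.comap_bot,
          Submodule.ker_subtype, Submodule.comap_bot, Submodule.ker_subtype]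

/-- Let `L` be a finite-dimensional simple complex Lie algebra with a
`ℤ/nℤ`-grading `V`, and let `h0` be a Cartan subalgebra of the grade-zero subalgebra
`g0`.  Then the restriction to `h0` of the Killing form of `L` is nondegenerate. -/
theorem killing_restricted_to_h0_nondegenerate {n : ℕ}
    {L : Type} [LieRing L] [LieAlgebra ℂ L]
    [FiniteDimensional ℂ L] [LieAlgebra.IsSimple ℂ L]
    (V : ZMod n → Submodule ℂ L)
    (hVinternal : DirectSum.IsInternal V)
    (hVbracket : ∀ i j : ZMod n, ∀ x ∈ V i, ∀ y ∈ V j, ⁅x, y⁆ ∈ V (i + j))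
    (g0 : LieSubalgebra ℂ L) (hg0 : g0.toSubmodule = V 0)
    (h0 : LieSubalgebra ℂ ↥g0) (hh0cartan : h0.IsCartanSubalgebra) :
    ∀ x : ↥g0, x ∈ h0 →
      (∀ y : ↥g0, y ∈ h0 → killingForm ℂ L (x : L) (y : L) = 0) →
      (x : L) = 0 := by
  have graded : SetLike.GradedBracket V := ⟨fun i j x y hx hy ↦ hVbracket i j x hx y hy⟩
  intro x hx hxy
  exact congrArg (fun z : h0 ↦ (z : L)) <|
    (killing_restricted_to_h0_nondegenerate_general V hVinternal g0 hg0 h0).1 ⟨x, hx⟩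
      fun y ↦ hxy y y.2
end
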